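/- (Composition Lemma.) Let (X,d) be a finite metric space with n = |X| ≥ 2 points, let (Ω, μ) be a probability space, and let f : Ω → X → ℝ^s be a random function such that for each v ∈ X and each coordinate j ∈ {1,…,s} the map ω ↦ f_j(ω)(v) is measurable and integrable, and such that for constants ρ, τ ≥ 1 and k ∈ ℕ: (1) for every ω ∈ Ω, every u,v ∈ X and every j, |f_j(ω)(v) − f_j(ω)(u)| ≤ ρ·d(u,v); (2) for every u,v ∈ X there exists a coordinate j with E_ω[|f_j(ω)(v) − f_j(ω)(u)|] ≥ d(u,v)/τ; (3) for every ω ∈ Ω and every v ∈ X, the vector f(ω)(v) has at most k nonzero coordinates. Then for every real p ≥ 1 there exist D ∈ ℕ and a map g : X → ℝ^D such that for all u,v ∈ X, d(u,v)/(C·ρ·τ) ≤ ‖g(v) − g(u)‖_p ≤ C·ρ·k^{1/p}·d(u,v), where C > 0 is a universal constant; in particular (X,d) embeds into ℓ_p with distortion at most C'·ρ²·τ·k^{1/p} for a universal constant C'. -/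

import Mathlib

open MeasureTheory

/-!
The mean of a random vector lies in the closure of the convex hull of its values. As there are only
finitely many pairs `(u, v)`, finitely many samples `ω i` with convex weights `w i` thus recover at
least half of every expected contribution `E |f ω v j - f ω u j|`. Concatenate the maps `f (ω i)`,
scaled by `w i ^ (1 / p)`: the `p`-th power of the resulting `ℓ_p` distance is the `w`-average of
the `p`-th powers of the individual distances. It is bounded below by the power mean inequality, and
above because two vectors with at most `k` nonzero coordinates each differ in at most `2 * k`
coordinates.
-/

section Sampling

variable {Ω : Type*} [MeasurableSpace Ω] {μ : Measure Ω} [IsProbabilityMeasure μ]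

theorem integral_mem_closure_convexHull_image {E : Type*} [NormedAddCommGroup E]
    [NormedSpace ℝ E] [CompleteSpace E] {F : Ω → E} (hF : Integrable F μ) {s : Set Ω}
    (hs : ∀ᵐ ω ∂μ, ω ∈ s) : ∫ ω, F ω ∂μ ∈ closure (convexHull ℝ (F '' s)) :=
  (convex_convexHull ℝ _).closure.integral_mem isClosed_closure
    (hs.mono fun _ hω => subset_closure (subset_convexHull ℝ _ (Set.mem_image_of_mem F hω))) hF

theorem exists_sum_smul_mem_of_integral_mem {E : Type*} [NormedAddCommGroup E]
    [NormedSpace ℝ E] [CompleteSpace E] {F : Ω → E} (hF : Integrable F μ) {s : Set Ω}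
    (hs : ∀ᵐ ω ∂μ, ω ∈ s) {U : Set E} (hU : IsOpen U) (hFU : ∫ ω, F ω ∂μ ∈ U) :
    ∃ (ι : Type) (_ : Fintype ι), ∃ w ∈ stdSimplex ℝ ι, ∃ ω : ι → Ω,
      (∀ i, ω i ∈ s) ∧ ∑ i, w i • F (ω i) ∈ U := by
  obtain ⟨y, hyU, hy⟩ :=
    mem_closure_iff.1 (integral_mem_closure_convexHull_image hF hs) U hU hFU
  obtain ⟨ι, hι, w, z, hw₀, hw₁, hz, rfl⟩ := mem_convexHull_iff_exists_fintype.1 hy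
  choose ω hωs hωz using hz
  exact ⟨ι, hι, w, ⟨hw₀, hw₁⟩, ω, hωs, by simpa only [hωz] using hyU⟩

theorem exists_forall_mul_integral_le_sum {A : Type*} [Finite A] {F : A → Ω → ℝ}
    (hF : ∀ a, Integrable (F a) μ) (hF₀ : ∀ a ω, 0 ≤ F a ω) {s : Set Ω}
    (hs : ∀ᵐ ω ∂μ, ω ∈ s) {θ : ℝ} (hθ : θ < 1) :
    ∃ (ι : Type) (_ : Fintype ι), ∃ w ∈ stdSimplex ℝ ι, ∃ ω : ι → Ω,
      (∀ i, ω i ∈ s) ∧ ∀ a, θ * ∫ ω', F a ω' ∂μ ≤ ∑ i, w i * F a (ω i) := by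
  have := Fintype.ofFinite A
  let U : Set (A → ℝ) := {y | ∀ a, 0 < ∫ ω, F a ω ∂μ → θ * ∫ ω, F a ω ∂μ < y a}
  have hU : IsOpen U := by
    simp only [U, Set.ofPred_forall]
    exact isOpen_iInter_of_finite fun a => isOpen_iInter_of_finite fun _ =>
      isOpen_lt continuous_const (continuous_apply a)
  have hFU : ∫ ω, (fun a => F a ω) ∂μ ∈ U := fun a ha => by
    rw [eval_integral hF]
    exact mul_lt_of_lt_one_left ha hθ
  obtain ⟨ι, hι, w, hw, ω, hωs, hω⟩ :=
    exists_sum_smul_mem_of_integral_mem (Integrable.of_eval hF) hs hU hFU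
  refine ⟨ι, hι, w, hw, ω, hωs, fun a => ?_⟩
  rcases (integral_nonneg (μ := μ) (f := F a) (hF₀ a)).eq_or_lt with hzero | hpos
  · rw [← hzero, mul_zero]
    exact Finset.sum_nonneg fun i _ => mul_nonneg (hw.1 i) (hF₀ a _)
  · simpa only [Finset.sum_apply, Pi.smul_apply, smul_eq_mul] using (hω a hpos).le

end Sampling

section Concatenation

variable {ι J : Type*} {p : ℝ} {w : ι → ℝ}

/-- The concatenation of the vectors `x i`, the `i`-th one scaled by `w i ^ (1 / p)`, so that the
`p`-th power of its `ℓ_p` norm is the sum of those of the `x i` with weights `w i`. -/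
noncomputable def weightedConcat (p : ℝ) (w : ι → ℝ) (x : ι → J → ℝ) : ι × J → ℝ :=
  fun a => w a.1 ^ (1 / p) * x a.1 a.2

theorem abs_weightedConcat_sub_rpow (hp : p ≠ 0) {i : ι} (hw : 0 ≤ w i) (x y : ι → J → ℝ) (j : J) :
    |weightedConcat p w x (i, j) - weightedConcat p w y (i, j)| ^ p =
      w i * |x i j - y i j| ^ p := by
  have hwp : 0 ≤ w i ^ (1 / p) := Real.rpow_nonneg hw _
  rw [weightedConcat, weightedConcat, ← mul_sub, abs_mul, abs_of_nonneg hwp,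
    Real.mul_rpow hwp (abs_nonneg _), ← Real.rpow_mul hw, one_div_mul_cancel hp, Real.rpow_one]

variable [Fintype ι] [Fintype J]

theorem sum_abs_weightedConcat_sub_rpow (hp : p ≠ 0) (hw : ∀ i, 0 ≤ w i) (x y : ι → J → ℝ) :
    ∑ a, |weightedConcat p w x a - weightedConcat p w y a| ^ p =
      ∑ i, w i * ∑ j, |x i j - y i j| ^ p := by
  simp only [Fintype.sum_prod_type, abs_weightedConcat_sub_rpow hp (hw _), Finset.mul_sum]

theorem sum_mul_abs_sub_le_weightedConcat (hp : 1 ≤ p) (hw : w ∈ stdSimplex ℝ ι)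
    (x y : ι → J → ℝ) (j : J) :
    ∑ i, w i * |x i j - y i j| ≤
      (∑ a, |weightedConcat p w x a - weightedConcat p w y a| ^ p) ^ (1 / p) := by
  have hsingle (i : ι) : |x i j - y i j| ^ p ≤ ∑ j', |x i j' - y i j'| ^ p :=
    Finset.single_le_sum (f := fun j' => |x i j' - y i j'| ^ p)
      (fun _ _ => by positivity) (Finset.mem_univ j)
  rw [sum_abs_weightedConcat_sub_rpow (by positivity) hw.1]
  calc ∑ i, w i * |x i j - y i j|
      ≤ (∑ i, w i * |x i j - y i j| ^ p) ^ (1 / p) :=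
        Real.arith_mean_le_rpow_mean _ _ _ (fun i _ => hw.1 i) hw.2 (fun _ _ => abs_nonneg _) hp
    _ ≤ (∑ i, w i * ∑ j', |x i j' - y i j'| ^ p) ^ (1 / p) := by
        refine Real.rpow_le_rpow
          (Finset.sum_nonneg fun i _ => mul_nonneg (hw.1 i) (by positivity)) ?_ (by positivity)
        exact Finset.sum_le_sum fun i _ => mul_le_mul_of_nonneg_left (hsingle i) (hw.1 i)

theorem sum_abs_weightedConcat_sub_rpow_le (hp : p ≠ 0) (hw : w ∈ stdSimplex ℝ ι)
    {x y : ι → J → ℝ} {B : ℝ} (hB : ∀ i, ∑ j, |x i j - y i j| ^ p ≤ B) :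
    ∑ a, |weightedConcat p w x a - weightedConcat p w y a| ^ p ≤ B :=
  calc ∑ a, |weightedConcat p w x a - weightedConcat p w y a| ^ p
      = ∑ i, w i * ∑ j, |x i j - y i j| ^ p := sum_abs_weightedConcat_sub_rpow hp hw.1 x y
    _ ≤ ∑ i, w i * B := Finset.sum_le_sum fun i _ => mul_le_mul_of_nonneg_left (hB i) (hw.1 i)
    _ = B := by rw [← Finset.sum_mul, hw.2, one_mul]

end Concatenation

section Sparse

variable {J : Type*} [Fintype J] {p M : ℝ} {x y : J → ℝ}

theorem sum_abs_sub_rpow_le_hammingDist_mul (hp : 0 < p) (hM : ∀ j, |x j - y j| ≤ M) :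
    ∑ j, |x j - y j| ^ p ≤ hammingDist x y * M ^ p := by
  have hdiff (j : J) (_ : j ∈ Finset.univ) (hj : |x j - y j| ^ p ≠ 0) : x j ≠ y j := by
    rintro hxy
    simp [hxy, hp.ne'] at hj
  rw [← Finset.sum_filter_of_ne hdiff, ← nsmul_eq_mul]
  exact Finset.sum_le_card_nsmul _ _ _ fun j _ => Real.rpow_le_rpow (abs_nonneg _) (hM j) hp.le

theorem sum_abs_sub_rpow_le_of_hammingNorm_le {k : ℕ} (hp : 0 < p) (hM₀ : 0 ≤ M)
    (hM : ∀ j, |x j - y j| ≤ M) (hx : hammingNorm x ≤ k) (hy : hammingNorm y ≤ k) :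
    ∑ j, |x j - y j| ^ p ≤ 2 * k * M ^ p := by
  have hxy : hammingDist x y ≤ 2 * k := by
    have := hammingDist_triangle_right x y 0
    simp only [hammingDist_zero_right] at this
    omega
  refine (sum_abs_sub_rpow_le_hammingDist_mul hp hM).trans ?_
  gcongr
  exact_mod_cast hxy

end Sparse

theorem rpow_one_div_two_mul_mul_rpow_le {p c M : ℝ} (hp : 1 ≤ p) (hc : 0 ≤ c) (hM : 0 ≤ M) :
    (2 * c * M ^ p) ^ (1 / p) ≤ 2 * c ^ (1 / p) * M := by
  have hp₀ : 0 < p := by positivity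
  have htwo : (2 : ℝ) ^ (1 / p) ≤ 2 :=
    Real.rpow_le_self_of_one_le one_le_two ((div_le_one hp₀).2 hp)
  rw [Real.mul_rpow (by positivity) (by positivity), Real.mul_rpow zero_le_two hc,
    ← Real.rpow_mul hM, mul_one_div_cancel hp₀.ne', Real.rpow_one]
  gcongr

theorem composition_lemma_general {X Ω J : Type*} [PseudoMetricSpace X] [Finite X]
    [MeasurableSpace Ω] {μ : Measure Ω} [IsProbabilityMeasure μ] [Fintype J]
    {f : Ω → X → J → ℝ} {ρ τ : ℝ} {k : ℕ} (hρ : 0 ≤ ρ) (hτ : 0 ≤ τ)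
    (hmeas : ∀ v j, AEStronglyMeasurable (fun ω => f ω v j) μ)
    (hlip : ∀ᵐ ω ∂μ, ∀ u v j, |f ω v j - f ω u j| ≤ ρ * dist u v)
    (hexp : ∀ u v, ∃ j, dist u v ≤ τ * ∫ ω, |f ω v j - f ω u j| ∂μ)
    (hsparse : ∀ᵐ ω ∂μ, ∀ v, hammingNorm (f ω v) ≤ k) {p : ℝ} (hp : 1 ≤ p) :
    ∃ (D : ℕ) (g : X → Fin D → ℝ), ∀ u v,
      dist u v ≤ 2 * τ * (∑ l, |g v l - g u l| ^ p) ^ (1 / p) ∧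
      (∑ l, |g v l - g u l| ^ p) ^ (1 / p) ≤ 2 * ρ * (k : ℝ) ^ (1 / p) * dist u v := by
  have hp₀ : 0 < p := by positivity
  have hint (u v : X) (j : J) : Integrable (fun ω => |f ω v j - f ω u j|) μ :=
    (Integrable.of_bound ((hmeas v j).sub (hmeas u j)) (ρ * dist u v)
      (hlip.mono fun _ hω => hω u v j)).abs
  choose j hj using hexp
  obtain ⟨ι, _, w, hw, ω, hω, hmean⟩ :=
    exists_forall_mul_integral_le_sum (A := X × X) (fun a => hint a.1 a.2 (j a.1 a.2))
      (fun _ _ => abs_nonneg _) (hlip.and hsparse) one_half_lt_one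
  let G (v : X) : ι × J → ℝ := weightedConcat p w fun i => f (ω i) v
  let e := Fintype.equivFin (ι × J)
  refine ⟨_, fun v l => G v (e.symm l), fun u v => ?_⟩
  rw [e.symm.sum_comp fun a => |G v a - G u a| ^ p]
  constructor
  · have hlower := (hmean (u, v)).trans
      (sum_mul_abs_sub_le_weightedConcat hp hw (fun i => f (ω i) v) (fun i => f (ω i) u) (j u v))
    linarith [hj u v, mul_le_mul_of_nonneg_left hlower hτ]
  · have hM : 0 ≤ ρ * dist u v := by positivity
    have hupper : ∑ a, |G v a - G u a| ^ p ≤ 2 * k * (ρ * dist u v) ^ p :=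
      sum_abs_weightedConcat_sub_rpow_le hp₀.ne' hw fun i =>
        sum_abs_sub_rpow_le_of_hammingNorm_le hp₀ hM ((hω i).1 u v) ((hω i).2 v) ((hω i).2 u)
    calc (∑ a, |G v a - G u a| ^ p) ^ (1 / p)
        ≤ (2 * k * (ρ * dist u v) ^ p) ^ (1 / p) := by gcongr
      _ ≤ 2 * (k : ℝ) ^ (1 / p) * (ρ * dist u v) :=
          rpow_one_div_two_mul_mul_rpow_le hp k.cast_nonneg hM
      _ = 2 * ρ * (k : ℝ) ^ (1 / p) * dist u v := by ring

/-- Composition Lemma: a random function into `ℝ^s` which is per-coordinate `ρ`-Lipschitz,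
has for each pair a coordinate with expected contribution at least `d(u,v)/τ`, and whose
values have support of size at most `k`, yields for every `p ≥ 1` an embedding into
`ℓ_p^D` with contraction `O(ρτ)` and expansion `O(ρ k^{1/p})`. -/
theorem composition_lemma :
    ∃ C : ℝ, 0 < C ∧
      ∀ (X : Type) [MetricSpace X] [Fintype X], 2 ≤ Fintype.card X →
      ∀ (Ω : Type) [MeasurableSpace Ω] (μ : Measure Ω), IsProbabilityMeasure μ →
      ∀ (s : ℕ) (f : Ω → X → Fin s → ℝ) (ρ τ : ℝ) (k : ℕ),
        1 ≤ ρ → 1 ≤ τ →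
        (∀ (v : X) (j : Fin s), Integrable (fun ω => f ω v j) μ) →
        (∀ (ω : Ω) (u v : X) (j : Fin s), |f ω v j - f ω u j| ≤ ρ * dist u v) →
        (∀ u v : X, ∃ j : Fin s, dist u v / τ ≤ ∫ ω, |f ω v j - f ω u j| ∂μ) →
        (∀ (ω : Ω) (v : X),
          (Finset.univ.filter (fun j : Fin s => f ω v j ≠ 0)).card ≤ k) →
        ∀ p : ℝ, 1 ≤ p →
          ∃ (D : ℕ) (g : X → Fin D → ℝ), ∀ u v : X,
            dist u v / (C * ρ * τ) ≤ (∑ j, |g v j - g u j| ^ p) ^ (1 / p) ∧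
            (∑ j, |g v j - g u j| ^ p) ^ (1 / p) ≤ C * ρ * (k : ℝ) ^ (1 / p) * dist u v := by
  refine ⟨2, two_pos, fun X _ _ _ Ω _ μ _ s f ρ τ k hρ hτ hint hlip hexp hsparse p hp => ?_⟩
  obtain ⟨D, g, hg⟩ := composition_lemma_general (zero_le_one.trans hρ) (zero_le_one.trans hτ)
    (fun v j => (hint v j).aestronglyMeasurable) (ae_of_all μ hlip)
    (fun u v => (hexp u v).imp fun _ => (div_le_iff₀' (by positivity)).1)
    (ae_of_all μ hsparse) hp
  refine ⟨D, g, fun u v => ⟨div_le_of_le_mul₀ (by positivity) (by positivity) ?_, (hg u v).2⟩⟩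
  rw [mul_comm]
  exact (hg u v).1.trans (by gcongr; linarith)
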